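/- Fix a positive integer m and s = (α,β) ∈ ℚ², and define the completed second Appell–Lerch sum B̂^s_m(τ,z) := B^s_m(τ,z) + m·∑_{ℓ=0}^{2m−1} ϑ^{s,*}_{m,ℓ}(τ)·θ_{m,ℓ}(τ,z). Then: (1) B̂^{(α+λ,β+μ)}_m = e(−m(μα−λβ+λμ))·B̂^{(α,β)}_m for all λ,μ ∈ ℤ; (2) B̂^s_m(τ, z+λτ+μ) = e(−m(λ²τ+2λz))·B̂^s_m(τ,z) for all λ,μ ∈ ℤ; (3) B̂^s_m((aτ+b)/(cτ+d), z/(cτ+d)) = (cτ+d)²·e(mcz²/(cτ+d))·B̂^{sγ}_m(τ,z) for every γ = (a,b;c,d) ∈ SL(2,ℤ), where sγ := (αa+βc, αb+βd). -/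

import Mathlib

noncomputable section

open Complex Filter Topology MeasureTheory
open scoped Classical

/-- `ee x = e^{2πix}`. -/
def ee (x : ℂ) : ℂ := Complex.exp (2 * (Real.pi : ℂ) * Complex.I * x)

/-- The index-`m` elliptic transformation law on `ℍ × ℂ`. -/
def EllipticLaw (m : ℕ) (φ : ℂ → ℂ → ℂ) : Prop :=
  ∀ τ : ℂ, 0 < τ.im → ∀ z : ℂ, ∀ lam mu : ℤ,
    φ τ (z + (lam : ℂ) * τ + (mu : ℂ)) =
      ee (-(m : ℂ) * ((lam : ℂ) ^ 2 * τ + 2 * (lam : ℂ) * z)) * φ τ z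

/-- The weight-`k` index-`m` modular transformation law on `ℍ × ℂ`. -/
def ModularLaw (k : ℤ) (m : ℕ) (φ : ℂ → ℂ → ℂ) : Prop :=
  ∀ τ : ℂ, 0 < τ.im → ∀ z : ℂ, ∀ a b c d : ℤ, a * d - b * c = 1 →
    φ (((a : ℂ) * τ + (b : ℂ)) / ((c : ℂ) * τ + (d : ℂ))) (z / ((c : ℂ) * τ + (d : ℂ))) =
      ((c : ℂ) * τ + (d : ℂ)) ^ k *
        ee ((m : ℂ) * (c : ℂ) * z ^ 2 / ((c : ℂ) * τ + (d : ℂ))) * φ τ z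

/-- The theta function `θ_{m,ℓ}(τ,z) = ∑_{r ≡ ℓ (mod 2m)} q^{r²/4m} y^r`. -/
def jTheta (m : ℕ) (l : ℤ) (τ z : ℂ) : ℂ :=
  ∑' n : ℤ, ee (((l : ℂ) + 2 * (m : ℂ) * (n : ℂ)) ^ 2 / (4 * (m : ℂ)) * τ +
      ((l : ℂ) + 2 * (m : ℂ) * (n : ℂ)) * z)

/-- The point `z_s = ατ + β` for `s = (α,β) ∈ ℚ²`. -/
def zpt (s : ℚ × ℚ) (τ : ℂ) : ℂ := (s.1 : ℚ) * τ + (s.2 : ℚ)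

/-- The rational function `R_c^{(2)}(y) = y^{⌊c⌋+1}·(1/(y-1)² + (c-⌊c⌋)/(y-1))`. -/
def Rc2 (c : ℝ) (y : ℂ) : ℂ :=
  y ^ (⌊c⌋ + 1) * (1 / (y - 1) ^ 2 + ((c : ℂ) - (⌊c⌋ : ℂ)) / (y - 1))

/-- The index-`m` averaging operator `Av^{(m)}[F](τ,z) = ∑_{λ∈ℤ} q^{mλ²} y^{2mλ} F(q^λ y)`. -/
def Av (m : ℕ) (F : ℂ → ℂ) (τ z : ℂ) : ℂ :=
  ∑' lam : ℤ, ee ((m : ℂ) * (lam : ℂ) ^ 2 * τ + 2 * (m : ℂ) * (lam : ℂ) * z) *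
      F (ee ((lam : ℂ) * τ + z))

/-- The second Appell–Lerch sum `B^s_m(τ,z) = e(-mα z_s)·Av^{(m)}[R^{(2)}_{-2mα}(y/y_s)]`. -/
def AppellB (m : ℕ) (s : ℚ × ℚ) (τ z : ℂ) : ℂ :=
  ee (-(m : ℂ) * (s.1 : ℚ) * zpt s τ) *
    Av m (fun w => Rc2 ((-(2 * (m : ℚ) * s.1) : ℚ) : ℝ) (w / ee (zpt s τ))) τ z

/-- The complementary error function. -/
def erfc (x : ℝ) : ℝ := 2 / Real.sqrt Real.pi * ∫ t in Set.Ioi x, Real.exp (-t ^ 2)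

/-- The element `λ = n + α + ℓ/2m` of `ℤ + α + ℓ/2m`. -/
def lamVal (m : ℕ) (s : ℚ × ℚ) (l : ℤ) (n : ℤ) : ℝ :=
  (n : ℝ) + (s.1 : ℝ) + (l : ℝ) / (2 * (m : ℝ))

/-- The weight-1/2 unary theta series `ϑ^s_{m,ℓ}(τ)`. -/
def thS (m : ℕ) (s : ℚ × ℚ) (l : ℤ) (τ : ℂ) : ℂ :=
  ee (-(m : ℂ) * (s.1 : ℚ) * (s.2 : ℚ)) *
    ∑' n : ℤ, ee (2 * (m : ℂ) * (s.2 : ℚ) * (lamVal m s l n : ℝ)) *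
      ee ((m : ℂ) * (lamVal m s l n : ℝ) ^ 2 * τ)

/-- The Eichler integral `ϑ^{s,*}_{m,ℓ}(τ)` of the weight-1/2 unary theta series. -/
def thSstar (m : ℕ) (s : ℚ × ℚ) (l : ℤ) (τ : ℂ) : ℂ :=
  (starRingEnd ℂ) (thS m s l τ) / ((2 * Real.pi * Real.sqrt ((m : ℝ) * τ.im) : ℝ) : ℂ) -
    ee ((m : ℂ) * (s.1 : ℚ) * (s.2 : ℚ)) *
      ∑' n : ℤ, (|lamVal m s l n| : ℝ) *
        ee (-(2 * (m : ℂ) * (s.2 : ℚ) * (lamVal m s l n : ℝ))) *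
        (erfc (2 * |lamVal m s l n| * Real.sqrt (Real.pi * (m : ℝ) * τ.im)) : ℂ) *
        ee (-(m : ℂ) * (lamVal m s l n : ℝ) ^ 2 * τ)

/-- The completed second Appell–Lerch sum
`B̂^s_m = B^s_m + m·∑_{ℓ mod 2m} ϑ^{s,*}_{m,ℓ}·θ_{m,ℓ}`. -/
def BhatB (m : ℕ) (s : ℚ × ℚ) (τ z : ℂ) : ℂ :=
  AppellB m s τ z +
    (m : ℂ) * ∑ l ∈ Finset.range (2 * m), thSstar m s (l : ℤ) τ * jTheta m (l : ℤ) τ z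

/-!
The completed sum `B̂^s_m(τ, z)` is `-1/(4π²)` times an absolutely convergent series over `ℤ²` of
Gaussian-damped double poles

  `e(-mα(2z - z_s)) · exp(-(πm/τ₂)(z - z_s)²) / (z - z_s)²`,

twisted by the symplectic pairing of `s` with the lattice. Translations of `s` and `z` and the
action of `SL(2,ℤ)` merely permute the terms of this series, up to the stated factors.

To identify the series, write `exp(-aU²)/U² = 1/U² - ∫₀ᵃ exp(-tU²) dt` and sum over a row
`U ∈ w + ℤ`. The undamped poles form the Fourier series of `R_c^{(2)}` in `c` and add up to the
Appell–Lerch sum. Poisson summation under the integral sign turns the rest into integrals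
`∫₀ᵃ √(π/t) exp(-π²k²/t) dt`; evaluated in terms of `exp` and `erfc`, these give the two parts of
the Eichler integrals, once the resulting double sum is grouped by residues modulo `2m`.
-/

section

open scoped Real

/-! ### The character `ee` -/

lemma ee_add (x y : ℂ) : ee (x + y) = ee x * ee y := by
  simp only [ee, mul_add, Complex.exp_add]

lemma ee_neg (x : ℂ) : ee (-x) = (ee x)⁻¹ := by
  simp only [ee, mul_neg, Complex.exp_neg]

lemma ee_sub (x y : ℂ) : ee (x - y) = ee x / ee y := by
  simp only [ee, mul_sub, Complex.exp_sub]

lemma ee_ne_zero (x : ℂ) : ee x ≠ 0 := Complex.exp_ne_zero _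

lemma ee_eq_one_iff {x : ℂ} : ee x = 1 ↔ ∃ n : ℤ, x = n := by
  have h (n : ℤ) : 2 * π * I * x = n * (2 * π * I) ↔ x = n := by
    rw [mul_comm, mul_left_inj' two_pi_I_ne_zero]
  simp only [ee, Complex.exp_eq_one_iff, h]

lemma ee_eq_of_eq_add_intCast {x y : ℂ} (n : ℤ) (h : x = y + n) : ee x = ee y := by
  rw [h, ee_add, ee_eq_one_iff.mpr ⟨n, rfl⟩, mul_one]

lemma ee_zpow (x : ℂ) (n : ℤ) : ee x ^ n = ee (n * x) := by
  rw [ee, ee, ← Complex.exp_int_mul]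
  ring_nf

lemma norm_ee (x : ℂ) : ‖ee x‖ = Real.exp (-(2 * π * x.im)) := by
  rw [ee, Complex.norm_exp]
  simp

lemma conj_ee (x : ℂ) : (starRingEnd ℂ) (ee x) = ee (-(starRingEnd ℂ) x) := by
  simp only [ee, ← Complex.exp_conj, map_mul, map_ofNat, conj_ofReal, conj_I]
  ring_nf

/-! ### The Lipschitz-type summation formula for `Rc2` -/

lemma Rc2_add_intCast (c : ℝ) (k : ℤ) {y : ℂ} (hy : y ≠ 0) :
    Rc2 (c + k) y = y ^ k * Rc2 c y := by
  simp only [Rc2, Int.floor_add_intCast, ← mul_assoc, ← zpow_add₀ hy]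
  push_cast
  ring_nf

lemma integral_affine_mul_cexp {w : ℂ} (hw : w ≠ 0) (A B : ℂ) (a b : ℝ) :
    ∫ x in a..b, (A + x * B) * cexp (w * x) =
      ((A + b * B) / w - B / w ^ 2) * cexp (w * b) -
        ((A + a * B) / w - B / w ^ 2) * cexp (w * a) := by
  refine intervalIntegral.integral_eq_sub_of_hasDerivAt
    (f := fun x : ℝ => ((A + x * B) / w - B / w ^ 2) * cexp (w * x)) (fun x _ => ?_)
    (Continuous.intervalIntegrable (by fun_prop) _ _)
  have h_affine : HasDerivAt (fun x : ℂ => (A + x * B) / w - B / w ^ 2) (B / w) (x : ℂ) := by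
    simpa using ((((hasDerivAt_id (x : ℂ)).mul_const B).const_add A).div_const w).sub_const
      (B / w ^ 2)
  have h_exp : HasDerivAt (fun x : ℂ => cexp (w * x)) (cexp (w * x) * w) (x : ℂ) := by
    simpa using ((hasDerivAt_id (x : ℂ)).const_mul w).cexp
  refine (h_affine.mul h_exp).comp_ofReal.congr_deriv ?_
  field_simp
  ring

/-- The function `x ↦ e(-xu) R_x^{(2)}(e(u))` on `[0, 1)`, extended to `ℝ` by the same formula (so
that it takes equal values at `0` and `1`). It is the sum of the Fourier series
`∑ e(xn) / ((2πi)² (u + n)²)`. -/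
def twistedRc2 (u : ℂ) (x : ℝ) : ℂ :=
  (ee u / (ee u - 1) ^ 2 + x * (ee u / (ee u - 1))) * ee (-(x * u))

lemma twistedRc2_of_mem_Ico (u : ℂ) {x : ℝ} (hx : x ∈ Set.Ico 0 1) :
    twistedRc2 u x = Rc2 x (ee u) * ee (-(x * u)) := by
  rw [twistedRc2, Rc2, Int.floor_eq_zero_iff.mpr hx]
  simp only [zero_add, zpow_one, Int.cast_zero, sub_zero]
  ring

lemma continuous_twistedRc2 (u : ℂ) : Continuous (twistedRc2 u) := by
  unfold twistedRc2 ee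
  fun_prop

lemma ee_sub_one_ne_zero {u : ℂ} (hu : ∀ n : ℤ, u + n ≠ 0) : ee u - 1 ≠ 0 := by
  rw [sub_ne_zero, Ne, ee_eq_one_iff]
  rintro ⟨n, rfl⟩
  exact hu (-n) (by push_cast; ring)

lemma twistedRc2_zero_eq_one {u : ℂ} (hu : ∀ n : ℤ, u + n ≠ 0) :
    twistedRc2 u 0 = twistedRc2 u 1 := by
  have hy := ee_sub_one_ne_zero hu
  have hy0 := ee_ne_zero u
  have h0 : ee 0 = 1 := ee_eq_one_iff.mpr ⟨0, by simp⟩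
  simp only [twistedRc2, ofReal_zero, ofReal_one, zero_mul, neg_zero, one_mul, ee_neg, h0]
  field_simp
  ring

lemma fourierCoeffOn_twistedRc2 {u : ℂ} (hu : ∀ n : ℤ, u + n ≠ 0) (n : ℤ) :
    fourierCoeffOn zero_lt_one (twistedRc2 u) n = 1 / ((2 * π * I) ^ 2 * (u + n) ^ 2) := by
  set w : ℂ := -(2 * π * I * (u + n)) with hw
  have hw0 : w ≠ 0 := neg_ne_zero.mpr (mul_ne_zero two_pi_I_ne_zero (hu n))
  have h_integrand (x : ℝ) : fourier (-n) (x : AddCircle (1 - 0 : ℝ)) • twistedRc2 u x =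
      (ee u / (ee u - 1) ^ 2 + x * (ee u / (ee u - 1))) * cexp (w * x) := by
    have h_exp : cexp (2 * π * I * (-n : ℤ) * x / (1 - 0 : ℝ)) * ee (-(x * u)) = cexp (w * x) := by
      rw [ee, ← Complex.exp_add, hw]
      push_cast
      ring_nf
    rw [fourier_coe_apply, twistedRc2, smul_eq_mul, mul_left_comm, h_exp]
  have h_one : cexp w = (ee u)⁻¹ := by
    rw [← ee_neg, ← ee_eq_of_eq_add_intCast (x := -u - n) (-n) (by push_cast; ring), ee, hw]
    ring_nf
  rw [fourierCoeffOn_eq_integral]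
  simp_rw [h_integrand]
  rw [integral_affine_mul_cexp hw0, show (2 * π * I) ^ 2 * (u + n) ^ 2 = w ^ 2 by rw [hw]; ring]
  have hy := ee_sub_one_ne_zero hu
  have hy0 := ee_ne_zero u
  clear_value w
  simp only [ofReal_zero, ofReal_one, mul_zero, mul_one, Complex.exp_zero, h_one, zero_mul,
    add_zero, one_mul, sub_zero, div_one, one_smul]
  field_simp
  ring

lemma summable_inv_add_intCast_sq (u : ℂ) : Summable fun n : ℤ => ((u + n) ^ 2)⁻¹ := by
  simpa using EisensteinSeries.linear_right_summable u 1 (k := 2) le_rfl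

lemma hasSum_ee_mul_intCast_div_sq {u : ℂ} (hu : ∀ n : ℤ, u + n ≠ 0) {x : ℝ}
    (hx : x ∈ Set.Ico 0 1) :
    HasSum (fun n : ℤ => ee (x * n) / ((2 * π * I) ^ 2 * (u + n) ^ 2)) (twistedRc2 u x) := by
  have : Fact ((0 : ℝ) < 1) := ⟨one_pos⟩
  have h_glue : twistedRc2 u 0 = twistedRc2 u (0 + 1) := by simpa using twistedRc2_zero_eq_one hu
  let F : C(AddCircle (1 : ℝ), ℂ) := ⟨AddCircle.liftIco 1 0 (twistedRc2 u),
    AddCircle.liftIco_continuous h_glue (continuous_twistedRc2 u).continuousOn⟩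
  have h_coeff (n : ℤ) : fourierCoeff F n = 1 / ((2 * π * I) ^ 2 * (u + n) ^ 2) := by
    change fourierCoeff (AddCircle.liftIco 1 0 (twistedRc2 u)) n = _
    rw [fourierCoeff_liftIco_eq]
    simpa using fourierCoeffOn_twistedRc2 hu n
  have h_summable : Summable (fourierCoeff F) := by
    refine ((summable_inv_add_intCast_sq u).mul_left (1 / (2 * π * I : ℂ) ^ 2)).congr fun n => ?_
    rw [h_coeff, one_div, one_div, mul_inv]
  have h_value : F x = twistedRc2 u x :=
    AddCircle.liftIco_coe_apply (𝕜 := ℝ) (a := 0) (f := twistedRc2 u) (by simpa using hx)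
  rw [← h_value]
  refine (has_pointwise_sum_fourier_series_of_summable h_summable x).congr_fun fun n => ?_
  rw [h_coeff, fourier_coe_apply, ee, smul_eq_mul]
  push_cast
  ring_nf

theorem hasSum_ee_mul_div_sq (c : ℝ) {u : ℂ} (hu : ∀ n : ℤ, u + n ≠ 0) :
    HasSum (fun n : ℤ => ee (c * (u + n)) / (u + n) ^ 2) ((2 * π * I) ^ 2 * Rc2 c (ee u)) := by
  have h_mem : Int.fract c ∈ Set.Ico (0 : ℝ) 1 := ⟨Int.fract_nonneg c, Int.fract_lt_one c⟩
  have h := (hasSum_ee_mul_intCast_div_sq hu h_mem).mul_left ((2 * π * I) ^ 2 * ee (c * u))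
  have hc : (c : ℂ) = Int.fract c + (⌊c⌋ : ℤ) := by
    rw [← ofReal_intCast, ← ofReal_add, Int.fract_add_floor]
  have h_floor : Rc2 c (ee u) = ee (⌊c⌋ * u) * Rc2 (Int.fract c) (ee u) := by
    rw [← ee_zpow, ← Rc2_add_intCast _ _ (ee_ne_zero u), Int.fract_add_floor]
  have h_value : (2 * π * I) ^ 2 * Rc2 c (ee u) =
      (2 * π * I) ^ 2 * ee (c * u) * twistedRc2 u (Int.fract c) := by
    have h_phase : ee (⌊c⌋ * u) = ee (c * u) * ee (-(Int.fract c * u)) := by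
      rw [← ee_add, hc]
      ring_nf
    rw [h_floor, h_phase, twistedRc2_of_mem_Ico u h_mem]
    ring
  rw [h_value]
  refine h.congr_fun fun n => ?_
  have h_phase : ee (c * (u + n)) = ee (c * u) * ee (Int.fract c * n) := by
    rw [← ee_add]
    refine ee_eq_of_eq_add_intCast (⌊c⌋ * n) ?_
    push_cast
    linear_combination (n : ℂ) * hc
  have := hu n
  have := two_pi_I_ne_zero
  rw [h_phase]
  field_simp

/-! ### The Gaussian kernel and the complementary error function -/

lemma integrable_exp_neg_sq : Integrable fun t : ℝ => Real.exp (-t ^ 2) := by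
  simpa using integrable_exp_neg_mul_sq one_pos

lemma erfc_eq_integral_Ioi_sub (x : ℝ) : erfc x =
    2 / √π * ((∫ t in Set.Ioi (0 : ℝ), Real.exp (-t ^ 2)) - ∫ t in 0..x, Real.exp (-t ^ 2)) := by
  rw [erfc, ← intervalIntegral.integral_Ioi_sub_Ioi' integrable_exp_neg_sq.integrableOn
    integrable_exp_neg_sq.integrableOn, sub_sub_cancel]

lemma hasDerivAt_erfc (x : ℝ) : HasDerivAt erfc (-(2 / √π * Real.exp (-x ^ 2))) x := by
  have h_cont : Continuous fun t : ℝ => Real.exp (-t ^ 2) := by fun_prop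
  rw [funext erfc_eq_integral_Ioi_sub, ← mul_neg]
  exact ((h_cont.integral_hasStrictDerivAt 0 x).hasDerivAt.const_sub _).const_mul _

lemma tendsto_erfc_atTop : Tendsto erfc atTop (𝓝 0) := by
  have h := ((intervalIntegral_tendsto_integral_Ioi 0 integrable_exp_neg_sq.integrableOn
    tendsto_id).const_sub (∫ t in Set.Ioi (0 : ℝ), Real.exp (-t ^ 2))).const_mul (2 / √π)
  rw [sub_self, mul_zero] at h
  rw [funext erfc_eq_integral_Ioi_sub]
  exact h

/-- The value at `k` of the Fourier transform of the Gaussian `x ↦ exp (-t x²)`, for `0 < t`. -/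
def gaussFourier (k t : ℝ) : ℝ := √(π / t) * Real.exp (-(π ^ 2 * k ^ 2 / t))

lemma gaussFourier_nonneg (k t : ℝ) : 0 ≤ gaussFourier k t := by
  unfold gaussFourier
  positivity

lemma gaussFourier_le {a t : ℝ} (k : ℝ) (ht : 0 < t) (hta : t ≤ a) :
    gaussFourier k t ≤ √(π / t) * Real.exp (-(π ^ 2 * k ^ 2 / a)) := by
  unfold gaussFourier
  gcongr

lemma intervalIntegrable_sqrt_pi_div {a : ℝ} (ha : 0 < a) :
    IntervalIntegrable (fun t : ℝ => √(π / t)) volume 0 a := by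
  have h := (intervalIntegral.intervalIntegrable_rpow' (a := 0) (b := a)
    (r := -(1 / 2)) (by norm_num)).const_mul √π
  refine h.congr fun t ht => ?_
  rw [Set.uIoc_of_le ha.le] at ht
  simp only [Real.sqrt_div Real.pi_pos.le, Real.sqrt_eq_rpow t, Real.rpow_neg ht.1.le,
    div_eq_mul_inv √π]

lemma intervalIntegrable_gaussFourier (k : ℝ) {a : ℝ} (ha : 0 < a) :
    IntervalIntegrable (gaussFourier k) volume 0 a := by
  refine (intervalIntegrable_sqrt_pi_div ha).mono_fun ?_ ?_
  · apply Measurable.aestronglyMeasurable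
    unfold gaussFourier
    fun_prop
  · refine (ae_restrict_mem measurableSet_uIoc).mono fun t ht => ?_
    rw [Set.uIoc_of_le ha.le] at ht
    simp only [Real.norm_of_nonneg (gaussFourier_nonneg k t),
      Real.norm_of_nonneg (Real.sqrt_nonneg _)]
    refine mul_le_of_le_one_right (Real.sqrt_nonneg _) (Real.exp_le_one_iff.mpr ?_)
    have := ht.1
    exact neg_nonpos.mpr (by positivity)

/-- The integral of `gaussFourier k` over `[0, a]`: the value at `k` of the Fourier transform of
`x ↦ (1 - exp (-a x²)) / x²`. -/
def gaussFourierInt (a k : ℝ) : ℝ := ∫ t in 0..a, gaussFourier k t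

lemma gaussFourierInt_nonneg {a : ℝ} (ha : 0 < a) (k : ℝ) : 0 ≤ gaussFourierInt a k :=
  intervalIntegral.integral_nonneg ha.le fun t _ => gaussFourier_nonneg k t

lemma gaussFourierInt_le {a : ℝ} (ha : 0 < a) (k : ℝ) :
    gaussFourierInt a k ≤ (∫ t in 0..a, √(π / t)) * Real.exp (-(π ^ 2 * k ^ 2 / a)) := by
  rw [← intervalIntegral.integral_mul_const]
  exact intervalIntegral.integral_mono_on_of_le_Ioo ha.le (intervalIntegrable_gaussFourier k ha)
    ((intervalIntegrable_sqrt_pi_div ha).mul_const _) fun t ht => gaussFourier_le k ht.1 ht.2.le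

/-- The antiderivative of `gaussFourier k` on `(0, ∞)` with limit `0` at `0` (its value at `0` is a
junk value). -/
def gaussFourierPrimitive (k t : ℝ) : ℝ :=
  2 * √(π * t) * Real.exp (-(π ^ 2 * k ^ 2 / t)) - 2 * π ^ 2 * |k| * erfc (π * |k| / √t)

lemma hasDerivAt_gaussFourierPrimitive (k : ℝ) {t : ℝ} (ht : 0 < t) :
    HasDerivAt (gaussFourierPrimitive k) (gaussFourier k t) t := by
  have h_sqrt : HasDerivAt (fun t => √(π * t)) (π / (2 * √(π * t))) t := by
    simpa using ((hasDerivAt_id t).const_mul π).sqrt (mul_pos Real.pi_pos ht).ne'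
  have h_exp : HasDerivAt (fun t => Real.exp (-(π ^ 2 * k ^ 2 / t)))
      (Real.exp (-(π ^ 2 * k ^ 2 / t)) * (π ^ 2 * k ^ 2 / t ^ 2)) t := by
    simpa [div_eq_mul_inv] using ((hasDerivAt_inv ht.ne').const_mul (π ^ 2 * k ^ 2)).neg.exp
  have h_arg : HasDerivAt (fun t => π * |k| / √t) (-(π * |k| / (2 * t * √t))) t := by
    simp only [div_eq_mul_inv (π * |k|)]
    refine (((Real.hasDerivAt_sqrt ht.ne').inv (Real.sqrt_ne_zero'.mpr ht)).const_mul
      (π * |k|)).congr_deriv ?_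
    rw [Real.sq_sqrt ht.le]
    field_simp
  have h_erfc := (hasDerivAt_erfc (π * |k| / √t)).comp t h_arg
  refine (((h_sqrt.const_mul 2).mul h_exp).sub
    (h_erfc.const_mul (2 * π ^ 2 * |k|))).congr_deriv ?_
  have h_arg_sq : -(π * |k| / √t) ^ 2 = -(π ^ 2 * k ^ 2 / t) := by
    rw [div_pow, Real.sq_sqrt ht.le, mul_pow, sq_abs]
  rw [h_arg_sq, gaussFourier, Real.sqrt_mul Real.pi_pos.le, Real.sqrt_div Real.pi_pos.le]
  have h_cancel : √π * √t * (π ^ 2 * k ^ 2 / t ^ 2) =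
      π ^ 2 * |k| * (1 / √π) * (π * |k| / (t * √t)) := by
    have := Real.sqrt_pos.mpr ht
    have := Real.sqrt_pos.mpr Real.pi_pos
    field_simp
    rw [Real.sq_sqrt Real.pi_pos.le, Real.sq_sqrt ht.le, sq_abs]
  have h_main : π / (√π * √t) = √π / √t := by
    nth_rw 1 [← Real.mul_self_sqrt Real.pi_pos.le, mul_div_mul_left _ _ (by positivity)]
  linear_combination Real.exp (-(π ^ 2 * k ^ 2 / t)) * (2 * h_cancel + h_main)

lemma tendsto_gaussFourierPrimitive_zero (k : ℝ) :
    Tendsto (gaussFourierPrimitive k) (𝓝[>] 0) (𝓝 0) := by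
  have h_exp : Tendsto (fun t => 2 * √(π * t) * Real.exp (-(π ^ 2 * k ^ 2 / t)))
      (𝓝[>] 0) (𝓝 0) := by
    have h_sqrt : Tendsto (fun t => 2 * √(π * t)) (𝓝[>] 0) (𝓝 0) := by
      have h_cont : Continuous fun t => 2 * √(π * t) := by fun_prop
      simpa using (h_cont.tendsto 0).mono_left nhdsWithin_le_nhds
    refine squeeze_zero' (Eventually.of_forall fun t => by positivity) ?_ h_sqrt
    filter_upwards [self_mem_nhdsWithin] with t (ht : 0 < t)
    refine mul_le_of_le_one_right (by positivity) (Real.exp_le_one_iff.mpr ?_)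
    exact neg_nonpos.mpr (by positivity)
  have h_erfc : Tendsto (fun t => 2 * π ^ 2 * |k| * erfc (π * |k| / √t)) (𝓝[>] 0) (𝓝 0) := by
    rcases eq_or_ne k 0 with rfl | hk
    · simp
    have h_sqrt : Tendsto (fun t => √t) (𝓝[>] 0) (𝓝[>] 0) := by
      refine tendsto_nhdsWithin_iff.mpr ⟨?_, ?_⟩
      · simpa using (Real.continuous_sqrt.tendsto 0).mono_left nhdsWithin_le_nhds
      · filter_upwards [self_mem_nhdsWithin] with t ht using Real.sqrt_pos.mpr ht
    have h_arg := (tendsto_inv_nhdsGT_zero.comp h_sqrt).const_mul_atTop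
      (mul_pos Real.pi_pos (abs_pos.mpr hk))
    simpa [Function.comp_def, div_eq_mul_inv] using
      (tendsto_erfc_atTop.comp h_arg).const_mul (2 * π ^ 2 * |k|)
  have h_sub := h_exp.sub h_erfc
  rwa [sub_zero] at h_sub

lemma gaussFourierInt_eq_primitive {a : ℝ} (ha : 0 < a) (k : ℝ) :
    gaussFourierInt a k = gaussFourierPrimitive k a := by
  rw [gaussFourierInt, intervalIntegral.integral_eq_sub_of_hasDerivAt_of_tendsto ha
    (fun t ht => hasDerivAt_gaussFourierPrimitive k ht.1) (intervalIntegrable_gaussFourier k ha)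
    (tendsto_gaussFourierPrimitive_zero k)
    ((hasDerivAt_gaussFourierPrimitive k ha).continuousAt.tendsto.mono_left nhdsWithin_le_nhds),
    sub_zero]

/-! ### Sums over `ℤ` -/

lemma summable_exp_quadratic {A : ℝ} (hA : 0 < A) (B C : ℝ) :
    Summable fun n : ℤ => Real.exp (-A * n ^ 2 + B * n + C) := by
  have h := (((summable_jacobiTheta₂_term_iff ((-(B / (2 * π)) : ℝ) * I) ((A / π : ℝ) * I)).mpr
    (by simpa using div_pos hA Real.pi_pos)).norm).mul_right (Real.exp C)
  refine h.congr fun n => ?_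
  have := Real.pi_ne_zero
  rw [norm_jacobiTheta₂_term, ← Real.exp_add, im_ofReal_mul, im_ofReal_mul, I_im]
  congr 1
  field_simp
  ring

lemma tsum_int_eq_sum_range_tsum {E : Type*} [AddCommGroup E] [UniformSpace E] [IsUniformAddGroup E]
    [CompleteSpace E] [T0Space E] {f : ℤ → E} (hf : Summable f) {N : ℕ} (hN : 0 < N) :
    ∑' n, f n = ∑ l ∈ Finset.range N, ∑' k : ℤ, f (l + N * k) := by
  have : NeZero N := ⟨hN.ne'⟩
  let e : Fin N × ℤ ≃ ℤ := (Equiv.prodComm _ _).trans (Int.divModEquiv N).symm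
  have h_apply (l : Fin N) (k : ℤ) : e (l, k) = l + N * k := by
    rw [add_comm, mul_comm]
    rfl
  have h_summable : Summable fun p => f (e p) := e.summable_iff.mpr hf
  rw [← e.tsum_eq, h_summable.tsum_prod, tsum_fintype, Finset.sum_range]
  simp only [h_apply]

lemma summable_inv_add_intCast_sq_add_one (x : ℝ) :
    Summable fun n : ℤ => ((x + n) ^ 2 + 1)⁻¹ := by
  refine (summable_inv_add_intCast_sq (x + I)).norm.congr fun n => ?_
  rw [norm_inv, norm_pow, ← Complex.normSq_eq_norm_sq, Complex.normSq_apply]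
  simp [sq]

/-! ### Rows of Gaussian-damped double poles -/

lemma tsum_ee_mul_gaussian (c : ℝ) (w : ℂ) {t : ℝ} (ht : 0 < t) :
    ∑' n : ℤ, ee (c * (w + n)) * cexp (-t * (w + n) ^ 2) =
      ∑' n : ℤ, ee (n * w) * gaussFourier (n - c) t := by
  have h_pi : (π : ℂ) ≠ 0 := by exact_mod_cast Real.pi_ne_zero
  have h_t : (t : ℂ) ≠ 0 := by exact_mod_cast ht.ne'
  have h_pos : 0 < t / π := div_pos ht Real.pi_pos
  have h_sqrt : 1 / ((t / π : ℝ) : ℂ) ^ (1 / 2 : ℂ) = √(π / t) := by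
    rw [← ofReal_one, ← ofReal_ofNat, ← ofReal_div, ← ofReal_cpow h_pos.le, ← Real.sqrt_eq_rpow,
      ← ofReal_div, one_div, ← Real.sqrt_inv, inv_div]
  have h_poisson := Complex.tsum_exp_neg_quadratic (a := (t / π : ℝ))
    (by rwa [ofReal_re]) (I * c - t * w / π)
  have h_left (n : ℤ) : ee (c * (w + n)) * cexp (-t * (w + n) ^ 2) =
      ee (c * w) * cexp (-t * w ^ 2) *
        cexp (-π * (t / π : ℝ) * n ^ 2 + 2 * π * (I * c - t * w / π) * n) := by
    simp only [ee, ← Complex.exp_add]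
    congr 1
    push_cast
    field_simp
    ring
  have h_right (n : ℤ) : ee (n * w) * gaussFourier (n - c) t =
      ee (c * w) * cexp (-t * w ^ 2) *
        (√(π / t) * cexp (-π / (t / π : ℝ) * (n + I * (I * c - t * w / π)) ^ 2)) := by
    simp only [ee, gaussFourier, ofReal_mul, ofReal_exp, mul_left_comm _ (√(π / t) : ℂ),
      ← Complex.exp_add]
    congr 2
    rw [show I * (I * c - t * w / π) = -c - I * t * w / π by linear_combination (c : ℂ) * I_sq]
    push_cast
    field_simp
    ring_nf
    rw [I_sq]
    ring
  simp_rw [h_left, h_right, tsum_mul_left]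
  rw [h_poisson, h_sqrt]

lemma summable_norm_ee_mul_gaussFourierInt {a : ℝ} (ha : 0 < a) (c : ℝ) (w : ℂ) :
    Summable fun n : ℤ => ‖ee (n * w)‖ * gaussFourierInt a (n - c) := by
  have h := (summable_exp_quadratic (A := π ^ 2 / a) (by positivity)
    (2 * π ^ 2 * c / a - 2 * π * w.im) (-(π ^ 2 * c ^ 2 / a))).mul_left (∫ t in 0..a, √(π / t))
  refine h.of_nonneg_of_le
    (fun n => mul_nonneg (norm_nonneg _) (gaussFourierInt_nonneg ha _)) fun n => ?_
  calc
    _ ≤ ‖ee (n * w)‖ * ((∫ t in 0..a, √(π / t)) * Real.exp (-(π ^ 2 * (n - c) ^ 2 / a))) := by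
      gcongr
      exact gaussFourierInt_le ha _
    _ = _ := by
      rw [mul_left_comm, norm_ee, ← Real.exp_add, ← ofReal_intCast, im_ofReal_mul]
      ring_nf

lemma norm_cexp_neg_mul_sq_le {a t : ℝ} (ht : t ≤ a) (U : ℂ) :
    ‖cexp (-t * U ^ 2)‖ ≤ Real.exp (a * (U.im ^ 2 + 1)) * Real.exp (-(U.re ^ 2 + 1) * t) := by
  have h_re : (-t * U ^ 2 : ℂ).re = -t * (U.re ^ 2 - U.im ^ 2) := by
    rw [← ofReal_neg, re_ofReal_mul, sq U, mul_re, sq, sq]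
  rw [Complex.norm_exp, h_re, ← Real.exp_add, Real.exp_le_exp]
  have h_mono := mul_le_mul_of_nonneg_right ht (by positivity : 0 ≤ U.im ^ 2 + 1)
  linarith

lemma integral_exp_neg_mul_le {b : ℝ} (hb : 0 < b) (a : ℝ) :
    ∫ t in 0..a, Real.exp (-b * t) ≤ b⁻¹ := by
  rw [intervalIntegral.integral_comp_mul_left _ (neg_ne_zero.mpr hb.ne'), integral_exp, mul_zero,
    Real.exp_zero, smul_eq_mul, inv_neg, neg_mul, ← mul_neg, neg_sub]
  exact mul_le_of_le_one_right (inv_nonneg.mpr hb.le) (sub_le_self _ (Real.exp_pos _).le)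

lemma integral_norm_cexp_neg_mul_sq_le {a : ℝ} (ha : 0 ≤ a) (U : ℂ) :
    ∫ t in 0..a, ‖cexp (-t * U ^ 2)‖ ≤ Real.exp (a * (U.im ^ 2 + 1)) * (U.re ^ 2 + 1)⁻¹ := by
  calc
    _ ≤ ∫ t in 0..a, Real.exp (a * (U.im ^ 2 + 1)) * Real.exp (-(U.re ^ 2 + 1) * t) :=
      intervalIntegral.integral_mono_on ha (Continuous.intervalIntegrable (by fun_prop) _ _)
        (Continuous.intervalIntegrable (by fun_prop) _ _)
        fun t ht => norm_cexp_neg_mul_sq_le ht.2 U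
    _ ≤ _ := by
      rw [intervalIntegral.integral_const_mul]
      gcongr
      exact integral_exp_neg_mul_le (by positivity) a

lemma summable_integral_norm_ee_mul_gaussian {a : ℝ} (ha : 0 ≤ a) (c : ℝ) (w : ℂ) :
    Summable fun n : ℤ => ∫ t in 0..a, ‖ee (c * (w + n)) * cexp (-t * (w + n) ^ 2)‖ := by
  refine ((summable_inv_add_intCast_sq_add_one w.re).mul_left
    (‖ee (c * w)‖ * Real.exp (a * (w.im ^ 2 + 1)))).of_nonneg_of_le
    (fun n => intervalIntegral.integral_nonneg ha fun t _ => norm_nonneg _) fun n => ?_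
  have h_norm : ‖ee (c * (w + n))‖ = ‖ee (c * w)‖ := by simp [norm_ee]
  simp only [norm_mul, h_norm, intervalIntegral.integral_const_mul, mul_assoc]
  gcongr
  simpa using integral_norm_cexp_neg_mul_sq_le ha (w + n)

lemma hasSum_integral_ee_mul_gaussian {a : ℝ} (ha : 0 < a) (c : ℝ) (w : ℂ) :
    HasSum (fun n : ℤ => ∫ t in 0..a, ee (c * (w + n)) * cexp (-t * (w + n) ^ 2))
      (∑' n : ℤ, ee (n * w) * gaussFourierInt a (n - c)) := by
  have h_norm (n : ℤ) : ∫ t in 0..a, ‖ee (n * w) * gaussFourier (n - c) t‖ =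
      ‖ee (n * w)‖ * gaussFourierInt a (n - c) := by
    simp only [norm_mul, norm_real, Real.norm_of_nonneg (gaussFourier_nonneg _ _),
      intervalIntegral.integral_const_mul, gaussFourierInt]
  have h_value (n : ℤ) : ee (n * w) * gaussFourierInt a (n - c) =
      ∫ t in 0..a, ee (n * w) * gaussFourier (n - c) t := by
    rw [intervalIntegral.integral_const_mul, intervalIntegral.integral_ofReal, gaussFourierInt]
  have h_space := summable_integral_norm_ee_mul_gaussian ha.le c w
  have h_freq := (summable_norm_ee_mul_gaussFourierInt ha c w).congr fun n => (h_norm n).symm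
  simp_rw [h_value]
  simp only [intervalIntegral.integral_of_le ha.le] at h_space h_freq ⊢
  have h_left := hasSum_integral_of_summable_integral_norm
    (fun n : ℤ => ((by fun_prop : Continuous fun t : ℝ => ee (c * (w + n)) *
      cexp (-t * (w + n) ^ 2)).intervalIntegrable 0 a).1) h_space
  have h_right := hasSum_integral_of_summable_integral_norm
    (fun n : ℤ => (intervalIntegrable_gaussFourier (n - c) ha).1.ofReal.const_mul (ee (n * w)))
    h_freq
  rw [setIntegral_congr_fun measurableSet_Ioc fun t ht =>
    tsum_ee_mul_gaussian c w ht.1] at h_left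
  exact h_right.tsum_eq ▸ h_left

lemma cexp_neg_mul_sq_div_sq (a : ℝ) {U : ℂ} (hU : U ≠ 0) :
    cexp (-a * U ^ 2) / U ^ 2 = 1 / U ^ 2 - ∫ t in 0..a, cexp (-t * U ^ 2) := by
  have h := integral_exp_mul_complex (a := 0) (b := a) (neg_ne_zero.mpr (pow_ne_zero 2 hU))
  simp only [neg_mul, mul_comm (U ^ 2)] at h ⊢
  rw [h, ofReal_zero, zero_mul, neg_zero, Complex.exp_zero]
  field_simp
  ring

theorem hasSum_ee_mul_gaussian_div_sq {a : ℝ} (ha : 0 < a) (c : ℝ) {w : ℂ}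
    (hw : ∀ n : ℤ, w + n ≠ 0) :
    HasSum (fun n : ℤ => ee (c * (w + n)) * (cexp (-a * (w + n) ^ 2) / (w + n) ^ 2))
      ((2 * π * I) ^ 2 * Rc2 c (ee w) - ∑' n : ℤ, ee (n * w) * gaussFourierInt a (n - c)) := by
  refine ((hasSum_ee_mul_div_sq c hw).sub
    (hasSum_integral_ee_mul_gaussian ha c w)).congr_fun fun n => ?_
  rw [cexp_neg_mul_sq_div_sq a (hw n), intervalIntegral.integral_const_mul]
  ring

/-! ### Double poles on the lattice -/

/-- The Gaussian-damped double pole at `z_s`, multiplied by the exponential of an affine function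
of `z`; this factor makes the family `s ↦ doublePole m s τ` stable, up to factors of automorphy,
under translations of `z` and under `SL(2,ℤ)`. -/
def doublePole (m : ℕ) (s : ℚ × ℚ) (τ z : ℂ) : ℂ :=
  ee (-m * s.1 * (2 * z - zpt s τ)) *
    (cexp (-(π * m / τ.im) * (z - zpt s τ) ^ 2) / (z - zpt s τ) ^ 2)

/-- The sum of the double poles over `s + ℤ²`, twisted by the symplectic pairing of `s` with the
lattice. -/
def doublePoleSeries (m : ℕ) (s : ℚ × ℚ) (τ z : ℂ) : ℂ :=
  ∑' p : ℤ × ℤ, ee (m * (p.1 * s.2 - s.1 * p.2)) * doublePole m (s - ((p.1 : ℚ), (p.2 : ℚ))) τ z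

lemma zpt_sub (s v : ℚ × ℚ) (τ : ℂ) : zpt (s - v) τ = zpt s τ - zpt v τ := by
  simp only [zpt, Prod.fst_sub, Prod.snd_sub]
  push_cast
  ring

lemma zpt_intCast (p : ℤ × ℤ) (τ : ℂ) :
    zpt ((p.1 : ℚ), (p.2 : ℚ)) τ = p.1 * τ + p.2 := by
  simp [zpt]

lemma doublePole_add_zpt (m : ℕ) (u v : ℚ × ℚ) (τ z : ℂ) :
    doublePole m u τ (z + zpt v τ) =
      ee (-m * (v.1 ^ 2 * τ + 2 * v.1 * z)) * ee (-m * (u.1 * v.2 - v.1 * u.2 + v.1 * v.2)) *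
        doublePole m (u - v) τ z := by
  have h_sub : z + zpt v τ - zpt u τ = z - zpt (u - v) τ := by
    rw [zpt_sub]
    ring
  rw [doublePole, doublePole, h_sub, ← mul_assoc, ← ee_add, ← ee_add]
  congr 2
  simp only [zpt, Prod.fst_sub, Prod.snd_sub]
  push_cast
  ring

lemma doublePoleSeries_add_intCast (m : ℕ) (s : ℚ × ℚ) (lam mu : ℤ) (τ z : ℂ) :
    doublePoleSeries m (s.1 + lam, s.2 + mu) τ z =
      ee (-m * (mu * s.1 - lam * s.2 + lam * mu)) * doublePoleSeries m s τ z := by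
  rw [doublePoleSeries, doublePoleSeries, ← (Equiv.addRight (lam, mu)).tsum_eq, ← tsum_mul_left]
  refine tsum_congr fun p => ?_
  have h_index : ((s.1 + lam, s.2 + mu) : ℚ × ℚ) - (((p.1 + lam : ℤ) : ℚ), ((p.2 + mu : ℤ) : ℚ)) =
      s - ((p.1 : ℚ), (p.2 : ℚ)) := by
    ext <;> simp
  simp only [Equiv.coe_addRight, Prod.fst_add, Prod.snd_add, h_index]
  rw [← mul_assoc, ← ee_add]
  congr 1
  apply ee_eq_of_eq_add_intCast (m * (p.1 * mu - lam * p.2 + lam * mu))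
  push_cast
  ring

lemma doublePoleSeries_add_lattice (m : ℕ) (s : ℚ × ℚ) (lam mu : ℤ) (τ z : ℂ) :
    doublePoleSeries m s τ (z + lam * τ + mu) =
      ee (-m * (lam ^ 2 * τ + 2 * lam * z)) * doublePoleSeries m s τ z := by
  have h_z : z + lam * τ + mu = z + zpt ((lam : ℚ), (mu : ℚ)) τ := by
    rw [zpt_intCast (lam, mu), add_assoc]
  rw [doublePoleSeries, doublePoleSeries, ← (Equiv.subRight (lam, mu)).tsum_eq, ← tsum_mul_left]
  refine tsum_congr fun p => ?_
  have h_index : s - (((p.1 - lam : ℤ) : ℚ), ((p.2 - mu : ℤ) : ℚ)) =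
      s - ((p.1 : ℚ), (p.2 : ℚ)) + ((lam : ℚ), (mu : ℚ)) := by
    ext <;> simp <;> ring
  simp only [Equiv.subRight_apply, Prod.fst_sub, Prod.snd_sub, h_index]
  rw [h_z, doublePole_add_zpt, add_sub_cancel_right]
  simp only [← mul_assoc, ← ee_add]
  congr 1
  apply ee_eq_of_eq_add_intCast (m * (p.1 * mu - lam * p.2 - lam * mu))
  simp only [Prod.fst_add, Prod.snd_add, Prod.fst_sub, Prod.snd_sub]
  push_cast
  ring

lemma zpt_moebius (s : ℚ × ℚ) {a b c d : ℤ} {τ : ℂ} (hj : (c : ℂ) * τ + d ≠ 0) :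
    zpt s ((a * τ + b) / (c * τ + d)) =
      zpt (s.1 * a + s.2 * c, s.1 * b + s.2 * d) τ / (c * τ + d) := by
  rw [eq_div_iff hj, zpt, zpt, add_mul, mul_assoc, div_mul_cancel₀ _ hj]
  push_cast
  ring

lemma denom_ne_zero_of_det_eq_one {a b c d : ℤ} (hdet : a * d - b * c = 1) {τ : ℂ}
    (hτ : 0 < τ.im) : (c : ℂ) * τ + d ≠ 0 := by
  intro h
  have h_im := congrArg Complex.im h
  have h_re := congrArg Complex.re h
  have h_c : c = 0 := by simpa [hτ.ne'] using h_im
  have h_d : d = 0 := by simpa [h_c] using h_re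
  simp [h_c, h_d] at hdet

lemma im_moebius {a b c d : ℤ} (hdet : a * d - b * c = 1) (τ : ℂ) :
    ((a * τ + b) / (c * τ + d)).im = τ.im / normSq (c * τ + d) := by
  have h_det : (a * d - b * c : ℝ) = 1 := by exact_mod_cast hdet
  rw [div_im, ← sub_div]
  congr 1
  simp only [add_re, add_im, mul_re, mul_im, intCast_re, intCast_im]
  linear_combination τ.im * h_det

lemma im_moebius_pos {a b c d : ℤ} (hdet : a * d - b * c = 1) {τ : ℂ} (hτ : 0 < τ.im) :
    0 < ((a * τ + b) / (c * τ + d)).im := by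
  rw [im_moebius hdet]
  exact div_pos hτ (normSq_pos.mpr (denom_ne_zero_of_det_eq_one hdet hτ))

/- The defect `ee (m * c * w ^ 2 / (c * τ + d))` of the Gaussian comes from
`conj (c * τ + d) = c * τ + d - 2 * I * c * τ.im`. -/
lemma cexp_neg_mul_sq_moebius (m : ℕ) {a b c d : ℤ} (hdet : a * d - b * c = 1) {τ : ℂ}
    (hτ : 0 < τ.im) (w : ℂ) :
    cexp (-(π * m / ((a * τ + b) / (c * τ + d)).im) * (w / (c * τ + d)) ^ 2) =
      ee (m * c * w ^ 2 / (c * τ + d)) * cexp (-(π * m / τ.im) * w ^ 2) := by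
  have h_j := denom_ne_zero_of_det_eq_one hdet hτ
  have h_im : (τ.im : ℂ) ≠ 0 := by exact_mod_cast hτ.ne'
  have h_conj : starRingEnd ℂ (c * τ + d) = c * τ + d - 2 * I * c * τ.im := by
    have h_sub := sub_conj τ
    push_cast at h_sub
    simp only [map_add, map_mul, map_intCast]
    linear_combination (-c) * h_sub
  rw [im_moebius hdet, ofReal_div, ← mul_conj, h_conj, ee, ← Complex.exp_add]
  congr 1
  field_simp
  ring

lemma doublePole_moebius (m : ℕ) (s : ℚ × ℚ) {a b c d : ℤ} (hdet : a * d - b * c = 1) {τ : ℂ}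
    (hτ : 0 < τ.im) (z : ℂ) :
    doublePole m s ((a * τ + b) / (c * τ + d)) (z / (c * τ + d)) =
      (c * τ + d) ^ 2 * ee (m * c * z ^ 2 / (c * τ + d)) *
        doublePole m (s.1 * a + s.2 * c, s.1 * b + s.2 * d) τ z := by
  have h_j := denom_ne_zero_of_det_eq_one hdet hτ
  have h_det : (a * d - b * c : ℂ) = 1 := by exact_mod_cast hdet
  rw [doublePole, doublePole, zpt_moebius s h_j, ← sub_div, cexp_neg_mul_sq_moebius m hdet hτ]
  set s' : ℚ × ℚ := (s.1 * a + s.2 * c, s.1 * b + s.2 * d) with h_s'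
  have h_cocycle : c * zpt s' τ = s'.1 * (c * τ + d) - s.1 := by
    simp only [zpt, h_s']
    push_cast
    linear_combination (-s.1 : ℂ) * h_det
  have h_phase : ee (-m * s.1 * (2 * (z / (c * τ + d)) - zpt s' τ / (c * τ + d))) *
      ee (m * c * (z - zpt s' τ) ^ 2 / (c * τ + d)) =
        ee (m * c * z ^ 2 / (c * τ + d)) * ee (-m * s'.1 * (2 * z - zpt s' τ)) := by
    rw [← ee_add, ← ee_add]
    congr 1
    field_simp
    linear_combination (-m * (2 * z - zpt s' τ)) * h_cocycle
  rw [div_pow, div_div_eq_mul_div]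
  linear_combination ((c * τ + d) ^ 2 * cexp (-(π * m / τ.im) * (z - zpt s' τ) ^ 2) /
    (z - zpt s' τ) ^ 2) * h_phase

/-- Right multiplication of row vectors by a matrix of determinant one, as a permutation of `ℤ²`. -/
def rowMulEquiv {a b c d : ℤ} (hdet : a * d - b * c = 1) : ℤ × ℤ ≃ ℤ × ℤ where
  toFun p := (p.1 * a + p.2 * c, p.1 * b + p.2 * d)
  invFun p := (p.1 * d - p.2 * c, p.2 * a - p.1 * b)
  left_inv p := by
    ext
    · linear_combination p.1 * hdet
    · linear_combination p.2 * hdet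
  right_inv p := by
    ext
    · linear_combination p.1 * hdet
    · linear_combination p.2 * hdet

lemma doublePoleSeries_moebius (m : ℕ) (s : ℚ × ℚ) {a b c d : ℤ} (hdet : a * d - b * c = 1)
    {τ : ℂ} (hτ : 0 < τ.im) (z : ℂ) :
    doublePoleSeries m s ((a * τ + b) / (c * τ + d)) (z / (c * τ + d)) =
      (c * τ + d) ^ 2 * ee (m * c * z ^ 2 / (c * τ + d)) *
        doublePoleSeries m (s.1 * a + s.2 * c, s.1 * b + s.2 * d) τ z := by
  have h_det : (a * d - b * c : ℂ) = 1 := by exact_mod_cast hdet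
  rw [eq_comm, doublePoleSeries, doublePoleSeries, ← (rowMulEquiv hdet).tsum_eq, ← tsum_mul_left]
  refine tsum_congr fun p => ?_
  simp only [rowMulEquiv, Equiv.coe_fn_mk]
  have h_index : (((s - ((p.1 : ℚ), (p.2 : ℚ))).1 * a + (s - ((p.1 : ℚ), (p.2 : ℚ))).2 * c,
      (s - ((p.1 : ℚ), (p.2 : ℚ))).1 * b + (s - ((p.1 : ℚ), (p.2 : ℚ))).2 * d) : ℚ × ℚ) =
      (s.1 * a + s.2 * c, s.1 * b + s.2 * d) -
        (((p.1 * a + p.2 * c : ℤ) : ℚ), ((p.1 * b + p.2 * d : ℤ) : ℚ)) := by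
    ext <;> simp <;> ring
  have h_symplectic : m * (p.1 * s.2 - s.1 * p.2) =
      m * (((p.1 * a + p.2 * c : ℤ) : ℂ) * ((s.1 * b + s.2 * d : ℚ) : ℂ) -
        ((s.1 * a + s.2 * c : ℚ) : ℂ) * ((p.1 * b + p.2 * d : ℤ) : ℂ)) := by
    push_cast
    linear_combination (-m * (p.1 * s.2 - s.1 * p.2) : ℂ) * h_det
  rw [doublePole_moebius m _ hdet hτ, h_index, h_symplectic]
  exact mul_left_comm _ _ _

lemma norm_doublePole (m : ℕ) (s : ℚ × ℚ) {τ : ℂ} (hτ : 0 < τ.im) (z : ℂ) :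
    ‖doublePole m s τ z‖ = Real.exp (2 * (π * m / τ.im) * z.im ^ 2) *
      (Real.exp (-(π * m / τ.im) * ‖z - zpt s τ‖ ^ 2) / ‖z - zpt s τ‖ ^ 2) := by
  have h_zpt : (zpt s τ).im = s.1 * τ.im := by simp [zpt]
  have h_norm (w : ℂ) : ‖w‖ ^ 2 = w.re ^ 2 + w.im ^ 2 := by
    rw [← Complex.normSq_eq_norm_sq, Complex.normSq_apply]
    ring
  have h_gauss (w : ℂ) : (-(π * m / τ.im) * w ^ 2 : ℂ).re =
      -(π * m / τ.im) * (w.re ^ 2 - w.im ^ 2) := by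
    have h_real : (-(π * m / τ.im) : ℂ) = ((-(π * m / τ.im) : ℝ) : ℂ) := by push_cast; rfl
    rw [h_real, re_ofReal_mul, sq, mul_re, sq, sq]
  have h_phase (w : ℂ) : (-m * s.1 * w : ℂ).im = -m * s.1 * w.im := by
    have h_real : (-m * s.1 : ℂ) = ((-m * s.1 : ℝ) : ℂ) := by push_cast; rfl
    rw [h_real, im_ofReal_mul]
  rw [doublePole, norm_mul, norm_div, norm_pow, norm_ee, Complex.norm_exp, ← mul_div_assoc,
    ← mul_div_assoc, ← Real.exp_add, ← Real.exp_add, h_gauss, h_phase, h_norm, sub_im, sub_im,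
    h_zpt, ← ofReal_ofNat, im_ofReal_mul]
  congr 2
  field_simp
  ring

lemma exp_neg_mul_sq_div_sq_le {κ : ℝ} (hκ : 0 < κ) (r : ℝ) :
    Real.exp (-κ * r ^ 2) / r ^ 2 ≤ κ⁻¹ * r⁻¹ ^ 4 := by
  rcases eq_or_ne r 0 with rfl | hr
  · simp
  have h_pos : 0 < κ * r ^ 2 := by positivity
  have h_exp : Real.exp (-κ * r ^ 2) ≤ (κ * r ^ 2)⁻¹ := by
    rw [neg_mul, Real.exp_neg]
    exact inv_anti₀ h_pos ((le_add_of_nonneg_right zero_le_one).trans (Real.add_one_le_exp _))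
  calc
    _ ≤ (κ * r ^ 2)⁻¹ / r ^ 2 := by gcongr
    _ = _ := by field_simp

lemma summable_norm_add_lattice_inv_pow_four {τ : ℂ} (hτ : 0 < τ.im) (w : ℂ) :
    Summable fun p : ℤ × ℤ => ‖w + (p.1 * τ + p.2)‖⁻¹ ^ 4 := by
  let L : PeriodPair :=
    { ω₁ := τ
      ω₂ := 1
      indep := LinearIndependent.pair_iff.mpr fun a b h => by
        have ha : a = 0 := by simpa [hτ.ne'] using congrArg Complex.im h
        simpa [ha] using h }
  have h := ZLattice.summable_norm_sub_inv_pow L.lattice 4 (by simp) (-w)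
  refine (L.latticeEquivProd.symm.toEquiv.summable_iff.mpr h).congr fun p => ?_
  have h_point : ((L.latticeEquivProd.symm p : L.lattice) : ℂ) = p.1 * τ + p.2 := by
    rw [L.latticeEquiv_symm_apply, mul_one]
  simp [h_point, add_comm]

lemma summable_doublePoleSeries {m : ℕ} (hm : 0 < m) (s : ℚ × ℚ) {τ : ℂ} (hτ : 0 < τ.im) (z : ℂ) :
    Summable fun p : ℤ × ℤ =>
      ee (m * (p.1 * s.2 - s.1 * p.2)) * doublePole m (s - ((p.1 : ℚ), (p.2 : ℚ))) τ z := by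
  have h_κ : 0 < π * m / τ.im := by positivity
  refine (((summable_norm_add_lattice_inv_pow_four hτ (z - zpt s τ)).mul_left
    (π * m / τ.im)⁻¹).mul_left (Real.exp (2 * (π * m / τ.im) * z.im ^ 2))).of_norm_bounded
    fun p => ?_
  have h_phase : ‖ee (m * (p.1 * s.2 - s.1 * p.2))‖ = 1 := by simp [norm_ee]
  have h_point : z - zpt (s - ((p.1 : ℚ), (p.2 : ℚ))) τ = z - zpt s τ + (p.1 * τ + p.2) := by
    rw [zpt_sub, zpt_intCast p]
    ring
  rw [norm_mul, h_phase, one_mul, norm_doublePole m _ hτ, h_point]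
  gcongr
  exact exp_neg_mul_sq_div_sq_le h_κ _

/-! ### Theta functions and Eichler integrals -/

/-- The term `q^{r²/4m} y^r` of the theta functions of index `m`. -/
def jThetaTerm (m : ℕ) (τ z : ℂ) (r : ℤ) : ℂ := ee (r ^ 2 / (4 * m) * τ + r * z)

lemma jTheta_eq_tsum (m : ℕ) (l : ℤ) (τ z : ℂ) :
    jTheta m l τ z = ∑' n : ℤ, jThetaTerm m τ z (l + 2 * m * n) := by
  simp only [jTheta, jThetaTerm]
  push_cast
  rfl

lemma jTheta_add_two_mul (m : ℕ) (l k : ℤ) (τ z : ℂ) :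
    jTheta m (l + 2 * m * k) τ z = jTheta m l τ z := by
  rw [jTheta_eq_tsum, jTheta_eq_tsum,
    ← (Equiv.addLeft k).tsum_eq fun n => jThetaTerm m τ z (l + 2 * m * n)]
  refine tsum_congr fun n => ?_
  rw [Equiv.coe_addLeft, mul_add, add_assoc]

lemma summable_norm_jThetaTerm {m : ℕ} (hm : 0 < m) {τ : ℂ} (hτ : 0 < τ.im) (z : ℂ) :
    Summable fun r => ‖jThetaTerm m τ z r‖ := by
  refine (summable_exp_quadratic (A := 2 * π * τ.im / (4 * m)) (by positivity)
    (-(2 * π * z.im)) 0).congr fun r => ?_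
  have h_im : (r ^ 2 / (4 * m) * τ + r * z : ℂ).im = r ^ 2 / (4 * m) * τ.im + r * z.im := by
    have h_real : (r ^ 2 / (4 * m) * τ + r * z : ℂ) =
        ((r ^ 2 / (4 * m) : ℝ) : ℂ) * τ + ((r : ℝ) : ℂ) * z := by
      push_cast
      rfl
    rw [h_real, add_im, im_ofReal_mul, im_ofReal_mul]
  rw [jThetaTerm, norm_ee, h_im]
  ring_nf

lemma summable_exp_neg_mul_affine_sq {A b : ℝ} (hA : 0 < A) (hb : b ≠ 0) (x : ℝ) :
    Summable fun n : ℤ => Real.exp (-A * (x + b * n) ^ 2) := by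
  refine (summable_exp_quadratic (A := A * b ^ 2) (by positivity) (-(2 * A * x * b))
    (-(A * x ^ 2))).congr fun n => ?_
  ring_nf

/-- The term indexed by `x ∈ ℤ + α + ℓ/2m` of the theta-type series representing
`4π² m ϑ^{s,*}_{m,ℓ}`. -/
def eichlerTerm (m : ℕ) (s : ℚ × ℚ) (τ : ℂ) (x : ℝ) : ℂ :=
  ee (m * s.1 * s.2 - 2 * m * s.2 * x - m * x ^ 2 * τ) *
    gaussFourierInt (π * m / τ.im) (2 * m * x)

lemma norm_eichlerTerm_le {m : ℕ} (hm : 0 < m) (s : ℚ × ℚ) {τ : ℂ} (hτ : 0 < τ.im) (x : ℝ) :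
    ‖eichlerTerm m s τ x‖ ≤
      (∫ t in 0..π * m / τ.im, √(π / t)) * Real.exp (-(2 * π * m * τ.im) * x ^ 2) := by
  have h_κ : 0 < π * m / τ.im := by positivity
  have h_im : (m * s.1 * s.2 - 2 * m * s.2 * x - m * x ^ 2 * τ : ℂ).im = -(m * x ^ 2 * τ.im) := by
    have h_real : (m * s.1 * s.2 - 2 * m * s.2 * x - m * x ^ 2 * τ : ℂ) =
        ((m * s.1 * s.2 - 2 * m * s.2 * x : ℝ) : ℂ) - ((m * x ^ 2 : ℝ) : ℂ) * τ := by
      push_cast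
      rfl
    rw [h_real, sub_im, ofReal_im, im_ofReal_mul, zero_sub]
  rw [eichlerTerm, norm_mul, norm_ee, h_im, norm_real,
    Real.norm_of_nonneg (gaussFourierInt_nonneg h_κ _)]
  calc
    _ ≤ _ := mul_le_mul_of_nonneg_left (gaussFourierInt_le h_κ _) (Real.exp_pos _).le
    _ = _ := by
      rw [mul_left_comm, ← Real.exp_add]
      congr 2
      field_simp
      ring

lemma summable_norm_eichlerTerm {m : ℕ} (hm : 0 < m) (s : ℚ × ℚ) {τ : ℂ} (hτ : 0 < τ.im)
    {b : ℝ} (hb : b ≠ 0) (x : ℝ) :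
    Summable fun n : ℤ => ‖eichlerTerm m s τ (x + b * n)‖ :=
  ((summable_exp_neg_mul_affine_sq (A := 2 * π * m * τ.im) (by positivity) hb x).mul_left
    _).of_nonneg_of_le (fun _ => norm_nonneg _) fun _ => norm_eichlerTerm_le hm s hτ _

lemma gaussFourierInt_eq_exp_sub_erfc {m : ℕ} (hm : 0 < m) {v : ℝ} (hv : 0 < v) (x : ℝ) :
    gaussFourierInt (π * m / v) (2 * m * x) =
      2 * π * m / √(m * v) * Real.exp (-(4 * π * m * x ^ 2 * v)) -
        4 * π ^ 2 * m * |x| * erfc (2 * |x| * √(π * m * v)) := by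
  have h_sqrt : √(π * (π * m / v)) = π * m / √(m * v) := by
    rw [eq_div_iff (by positivity), ← Real.sqrt_mul (by positivity),
      show π * (π * m / v) * (m * v) = (π * m) ^ 2 by field_simp, Real.sqrt_sq (by positivity)]
  have h_arg : π * |2 * m * x| / √(π * m / v) = 2 * |x| * √(π * m * v) := by
    rw [div_eq_iff (by positivity), mul_assoc (2 * |x|), ← Real.sqrt_mul (by positivity),
      show π * m * v * (π * m / v) = (π * m) ^ 2 by field_simp, Real.sqrt_sq (by positivity),
      abs_mul, abs_of_pos (by positivity)]
    ring
  have h_exp : π ^ 2 * (2 * m * x) ^ 2 / (π * m / v) = 4 * π * m * x ^ 2 * v := by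
    field_simp
    ring
  rw [gaussFourierInt_eq_primitive (by positivity), gaussFourierPrimitive, h_sqrt, h_arg, h_exp,
    abs_mul, abs_of_pos (by positivity)]
  ring

lemma eichlerTerm_eq {m : ℕ} (hm : 0 < m) (s : ℚ × ℚ) {τ : ℂ} (hτ : 0 < τ.im) (x : ℝ) :
    eichlerTerm m s τ x = 4 * π ^ 2 * m * ee (m * s.1 * s.2) *
      (starRingEnd ℂ (ee (2 * m * s.2 * x) * ee (m * x ^ 2 * τ)) /
          ((2 * π * √(m * τ.im) : ℝ) : ℂ) -
        (|x| : ℝ) * ee (-(2 * m * s.2 * x)) * erfc (2 * |x| * √(π * m * τ.im)) *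
          ee (-m * x ^ 2 * τ)) := by
  have h_conj_τ : starRingEnd ℂ τ = τ - 2 * I * τ.im := by
    have h_sub := sub_conj τ
    push_cast at h_sub
    linear_combination -h_sub
  have h_conj : starRingEnd ℂ (ee (2 * m * s.2 * x) * ee (m * x ^ 2 * τ)) =
      ee (-(2 * m * s.2 * x)) * ee (-m * x ^ 2 * τ) *
        (Real.exp (-(4 * π * m * x ^ 2 * τ.im)) : ℝ) := by
    rw [map_mul, conj_ee, conj_ee]
    simp only [map_mul, map_pow, conj_ofReal, map_natCast, map_ratCast, map_ofNat, h_conj_τ]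
    simp only [ee, ofReal_exp, ← Complex.exp_add]
    congr 1
    push_cast
    linear_combination (4 * π * m * x ^ 2 * τ.im : ℂ) * I_sq
  have h_phase : ee (m * s.1 * s.2 - 2 * m * s.2 * x - m * x ^ 2 * τ) =
      ee (m * s.1 * s.2) * ee (-(2 * m * s.2 * x)) * ee (-m * x ^ 2 * τ) := by
    rw [← ee_add, ← ee_add]
    ring_nf
  have h_sqrt : ((√(m * τ.im) : ℝ) : ℂ) ≠ 0 := by
    exact_mod_cast (Real.sqrt_pos.mpr (by positivity)).ne'
  have h_pi : (π : ℂ) ≠ 0 := by exact_mod_cast Real.pi_ne_zero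
  rw [eichlerTerm, gaussFourierInt_eq_exp_sub_erfc hm hτ, h_phase, h_conj]
  push_cast
  field_simp
  ring

lemma lamVal_eq (m : ℕ) (s : ℚ × ℚ) (l n : ℤ) :
    lamVal m s l n = s.1 + l / (2 * m) + 1 * n := by
  rw [lamVal]
  ring

lemma summable_thS {m : ℕ} (hm : 0 < m) (s : ℚ × ℚ) {τ : ℂ} (hτ : 0 < τ.im) (l : ℤ) :
    Summable fun n : ℤ =>
      ee (2 * m * s.2 * lamVal m s l n) * ee (m * (lamVal m s l n) ^ 2 * τ) := by
  refine (summable_exp_neg_mul_affine_sq (A := 2 * π * m * τ.im) (by positivity) one_ne_zero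
    (s.1 + l / (2 * m))).of_norm_bounded fun n => le_of_eq ?_
  have h_unit (x : ℝ) : (2 * m * s.2 * x : ℂ).im = 0 := by
    rw [show (2 * m * s.2 * x : ℂ) = ((2 * m * s.2 * x : ℝ) : ℂ) by push_cast; rfl, ofReal_im]
  have h_theta (x : ℝ) : (m * x ^ 2 * τ : ℂ).im = m * x ^ 2 * τ.im := by
    rw [show (m * x ^ 2 : ℂ) = ((m * x ^ 2 : ℝ) : ℂ) by push_cast; rfl, im_ofReal_mul]
  rw [norm_mul, norm_ee, norm_ee, ← Real.exp_add, h_unit, h_theta, ← lamVal_eq]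
  ring_nf

lemma summable_erfc_thSstar {m : ℕ} (hm : 0 < m) (s : ℚ × ℚ) {τ : ℂ} (hτ : 0 < τ.im) (l : ℤ) :
    Summable fun n : ℤ => (|lamVal m s l n| : ℝ) * ee (-(2 * m * s.2 * lamVal m s l n)) *
      erfc (2 * |lamVal m s l n| * √(π * m * τ.im)) * ee (-m * lamVal m s l n ^ 2 * τ) := by
  have h_const : 4 * π ^ 2 * m * ee (m * s.1 * s.2) ≠ 0 :=
    mul_ne_zero (by simp [hm.ne']) (ee_ne_zero _)
  have h_theta := ((summable_thS hm s hτ l).star).div_const ((2 * π * √(m * τ.im) : ℝ) : ℂ)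
  have h_eichler : Summable fun n : ℤ => eichlerTerm m s τ (lamVal m s l n) := by
    simp only [lamVal_eq]
    exact (summable_norm_eichlerTerm hm s hτ one_ne_zero _).of_norm
  refine (h_theta.sub (h_eichler.mul_left (4 * π ^ 2 * m * ee (m * s.1 * s.2))⁻¹)).congr
    fun n => ?_
  rw [eichlerTerm_eq hm s hτ, inv_mul_cancel_left₀ h_const]
  exact sub_sub_cancel _ _

lemma tsum_eichlerTerm {m : ℕ} (hm : 0 < m) (s : ℚ × ℚ) {τ : ℂ} (hτ : 0 < τ.im) (l : ℤ) :
    ∑' k : ℤ, eichlerTerm m s τ (lamVal m s l k) = 4 * π ^ 2 * m * thSstar m s l τ := by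
  have h_conj : starRingEnd ℂ (ee (-m * s.1 * s.2)) = ee (m * s.1 * s.2) := by
    rw [conj_ee]
    congr 1
    simp
  have h_theta : Summable fun n : ℤ => starRingEnd ℂ
      (ee (2 * m * s.2 * lamVal m s l n) * ee (m * lamVal m s l n ^ 2 * τ)) :=
    (summable_thS hm s hτ l).star
  simp only [eichlerTerm_eq hm s hτ]
  rw [tsum_mul_left, (h_theta.div_const _).tsum_sub (summable_erfc_thSstar hm s hτ l),
    tsum_div_const, thSstar, thS, map_mul, h_conj, Complex.conj_tsum]
  ring

lemma summable_eichlerTerm_mul_jThetaTerm {m : ℕ} (hm : 0 < m) (s : ℚ × ℚ) {τ : ℂ}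
    (hτ : 0 < τ.im) (z : ℂ) :
    Summable fun p : ℤ × ℤ =>
      eichlerTerm m s τ (lamVal m s p.1 0) * jThetaTerm m τ z (p.1 + 2 * m * p.2) := by
  have h_eichler : Summable fun n : ℤ => ‖eichlerTerm m s τ (lamVal m s n 0)‖ := by
    refine (summable_norm_eichlerTerm hm s hτ (b := (2 * m)⁻¹) (by positivity) s.1).congr
      fun n => ?_
    rw [lamVal, Int.cast_zero, zero_add, inv_mul_eq_div]
  have h_inj : Function.Injective fun p : ℤ × ℤ => (p.1, p.1 + 2 * (m : ℤ) * p.2) := by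
    rintro ⟨n, k⟩ ⟨n', k'⟩ h
    simp only [Prod.mk.injEq] at h ⊢
    obtain ⟨rfl, h⟩ := h
    exact ⟨rfl, mul_left_cancel₀ (by positivity : 2 * (m : ℤ) ≠ 0) (add_left_cancel h)⟩
  have h_prod := summable_mul_of_summable_norm h_eichler (summable_norm_jThetaTerm hm hτ z)
  exact (h_prod.comp_injective h_inj).congr fun _ => rfl

lemma tsum_eichlerTerm_mul_jTheta {m : ℕ} (hm : 0 < m) (s : ℚ × ℚ) {τ : ℂ} (hτ : 0 < τ.im)
    (z : ℂ) :
    ∑' n : ℤ, eichlerTerm m s τ (lamVal m s n 0) * jTheta m n τ z =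
      4 * π ^ 2 * m * ∑ l ∈ Finset.range (2 * m), thSstar m s l τ * jTheta m l τ z := by
  have h_summable : Summable fun n : ℤ => eichlerTerm m s τ (lamVal m s n 0) * jTheta m n τ z := by
    simp only [jTheta_eq_tsum, ← tsum_mul_left]
    exact (summable_eichlerTerm_mul_jThetaTerm hm s hτ z).prod
  have h_lamVal (l k : ℤ) : lamVal m s (l + 2 * m * k) 0 = lamVal m s l k := by
    simp only [lamVal]
    push_cast
    field_simp
    ring
  rw [tsum_int_eq_sum_range_tsum h_summable (by positivity : 0 < 2 * m), Finset.mul_sum]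
  refine Finset.sum_congr rfl fun l _ => ?_
  push_cast
  simp only [h_lamVal, jTheta_add_two_mul]
  rw [tsum_mul_right, tsum_eichlerTerm hm s hτ, mul_assoc]

lemma hasSum_tsum_eichlerTerm_mul_jThetaTerm {m : ℕ} (hm : 0 < m) (s : ℚ × ℚ) {τ : ℂ}
    (hτ : 0 < τ.im) (z : ℂ) :
    HasSum (fun l : ℤ => ∑' n : ℤ,
        eichlerTerm m s τ (lamVal m s n 0) * jThetaTerm m τ z (n + 2 * m * l))
      (4 * π ^ 2 * m * ∑ l ∈ Finset.range (2 * m), thSstar m s l τ * jTheta m l τ z) := by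
  have h_pair := summable_eichlerTerm_mul_jThetaTerm hm s hτ z
  have h_swap := h_pair.prod_symm.prod.hasSum
  rw [h_pair.tsum_comm] at h_swap
  simp only [Prod.fst_swap, Prod.snd_swap, tsum_mul_left, ← jTheta_eq_tsum] at h_swap
  rw [tsum_eichlerTerm_mul_jTheta hm s hτ] at h_swap
  exact h_swap

/-! ### The completed Appell–Lerch sum as a series of double poles -/

/-- The factor `e(-mα z_s) q^{mλ²} y^{2mλ}` of the summand of `B^s_m` indexed by `λ`. -/
def appellWeight (m : ℕ) (s : ℚ × ℚ) (τ z : ℂ) (l : ℤ) : ℂ :=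
  ee (m * l ^ 2 * τ + 2 * m * l * z - m * s.1 * zpt s τ)

lemma AppellB_eq_tsum (m : ℕ) (s : ℚ × ℚ) (τ z : ℂ) :
    AppellB m s τ z = ∑' l : ℤ, appellWeight m s τ z l *
      Rc2 (-(2 * m * s.1)) (ee (z - zpt s τ + l * τ)) := by
  rw [AppellB, Av, ← tsum_mul_left]
  refine tsum_congr fun l => ?_
  have h_arg : ee (l * τ + z) / ee (zpt s τ) = ee (z - zpt s τ + l * τ) := by
    rw [← ee_sub]
    ring_nf
  rw [h_arg, ← mul_assoc, ← ee_add, appellWeight]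
  push_cast
  ring_nf

lemma appellWeight_mul_ee_mul_gaussFourierInt {m : ℕ} (hm : 0 < m) (s : ℚ × ℚ) (τ z : ℂ)
    (l n : ℤ) :
    appellWeight m s τ z l * (ee (n * (z - zpt s τ + l * τ)) *
        gaussFourierInt (π * m / τ.im) (n - -(2 * m * s.1))) =
      eichlerTerm m s τ (lamVal m s n 0) * jThetaTerm m τ z (n + 2 * m * l) := by
  have h_m : (m : ℂ) ≠ 0 := by exact_mod_cast hm.ne'
  have h_freq : n - -(2 * m * s.1) = 2 * m * lamVal m s n 0 := by
    rw [lamVal]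
    push_cast
    field_simp
    ring
  rw [h_freq, eichlerTerm, jThetaTerm, appellWeight, ← mul_assoc, ← ee_add,
    mul_right_comm _ (ofReal _), ← ee_add]
  congr 2
  simp only [zpt, lamVal]
  push_cast
  field_simp
  ring

lemma hasSum_appellWeight_mul_tsum {m : ℕ} (hm : 0 < m) (s : ℚ × ℚ) {τ : ℂ} (hτ : 0 < τ.im)
    (z : ℂ) :
    HasSum (fun l : ℤ => appellWeight m s τ z l * ∑' n : ℤ, ee (n * (z - zpt s τ + l * τ)) *
        gaussFourierInt (π * m / τ.im) (n - -(2 * m * s.1)))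
      (4 * π ^ 2 * m * ∑ l ∈ Finset.range (2 * m), thSstar m s l τ * jTheta m l τ z) := by
  simp only [← tsum_mul_left, appellWeight_mul_ee_mul_gaussFourierInt hm]
  exact hasSum_tsum_eichlerTerm_mul_jThetaTerm hm s hτ z

lemma ee_mul_doublePole_eq (m : ℕ) (s : ℚ × ℚ) (τ z : ℂ) (l n : ℤ) :
    ee (m * (l * s.2 - s.1 * n)) * doublePole m (s - ((l : ℚ), (n : ℚ))) τ z =
      appellWeight m s τ z l * (ee ((-(2 * m * s.1) : ℝ) * (z - zpt s τ + l * τ + n)) *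
        (cexp (-(π * m / τ.im : ℝ) * (z - zpt s τ + l * τ + n) ^ 2) /
          (z - zpt s τ + l * τ + n) ^ 2)) := by
  have h_point : z - zpt (s - ((l : ℚ), (n : ℚ))) τ = z - zpt s τ + l * τ + n := by
    rw [zpt_sub, zpt_intCast (l, n)]
    ring
  rw [doublePole, h_point, ← mul_assoc, ← mul_assoc, ← ee_add, appellWeight, ← ee_add]
  push_cast
  congr 1
  apply ee_eq_of_eq_add_intCast (m * l * n)
  simp only [zpt, Prod.fst_sub, Prod.snd_sub]
  push_cast
  ring

/-- The point `z` is not a pole of `B^s_m(τ, ·)`, i.e. `z ∉ z_s + ℤτ + ℤ`. -/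
def AvoidsPoles (s : ℚ × ℚ) (τ z : ℂ) : Prop :=
  ∀ a b : ℤ, z ≠ zpt s τ + a * τ + b

lemma hasSum_row_doublePoleSeries {m : ℕ} (hm : 0 < m) {s : ℚ × ℚ} {τ : ℂ} (hτ : 0 < τ.im) {z : ℂ}
    (hz : AvoidsPoles s τ z) (l : ℤ) :
    HasSum (fun n : ℤ =>
        ee (m * (l * s.2 - s.1 * n)) * doublePole m (s - ((l : ℚ), (n : ℚ))) τ z)
      (appellWeight m s τ z l *
        ((2 * π * I) ^ 2 * Rc2 (-(2 * m * s.1)) (ee (z - zpt s τ + l * τ)) -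
          ∑' n : ℤ, ee (n * (z - zpt s τ + l * τ)) *
            gaussFourierInt (π * m / τ.im) (n - -(2 * m * s.1)))) := by
  have h_ne (n : ℤ) : z - zpt s τ + l * τ + n ≠ 0 := by
    intro h
    apply hz (-l) (-n)
    push_cast
    linear_combination h
  simp only [ee_mul_doublePole_eq]
  exact (hasSum_ee_mul_gaussian_div_sq (by positivity) _ h_ne).mul_left _

theorem BhatB_eq_doublePoleSeries {m : ℕ} (hm : 0 < m) {s : ℚ × ℚ} {τ : ℂ} (hτ : 0 < τ.im) {z : ℂ}
    (hz : AvoidsPoles s τ z) :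
    BhatB m s τ z = -(1 / (4 * π ^ 2)) * doublePoleSeries m s τ z := by
  have h_rows : HasSum _ (doublePoleSeries m s τ z) :=
    (summable_doublePoleSeries hm s hτ z).hasSum.prod_fiberwise
      (hasSum_row_doublePoleSeries hm hτ hz)
  have h_poles := h_rows.add (hasSum_appellWeight_mul_tsum hm s hτ z)
  simp only [mul_sub, sub_add_cancel, mul_left_comm _ ((2 * π * I) ^ 2 : ℂ)] at h_poles
  have h_sum := h_poles.tsum_eq
  rw [tsum_mul_left, ← AppellB_eq_tsum] at h_sum
  rw [BhatB]
  field_simp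
  linear_combination -h_sum + 4 * π ^ 2 * AppellB m s τ z * I_sq

lemma AvoidsPoles.add_intCast {s : ℚ × ℚ} {τ z : ℂ} (hz : AvoidsPoles s τ z) (lam mu : ℤ) :
    AvoidsPoles (s.1 + lam, s.2 + mu) τ z := by
  intro a b h
  apply hz (a + lam) (b + mu)
  rw [h]
  simp only [zpt]
  push_cast
  ring

lemma AvoidsPoles.add_lattice {s : ℚ × ℚ} {τ z : ℂ} (hz : AvoidsPoles s τ z) (lam mu : ℤ) :
    AvoidsPoles s τ (z + lam * τ + mu) := by
  intro a b h
  apply hz (a - lam) (b - mu)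
  push_cast
  linear_combination h

lemma AvoidsPoles.moebius {s : ℚ × ℚ} {a b c d : ℤ} {τ z : ℂ}
    (hz : AvoidsPoles (s.1 * a + s.2 * c, s.1 * b + s.2 * d) τ z) (hj : (c : ℂ) * τ + d ≠ 0) :
    AvoidsPoles s ((a * τ + b) / (c * τ + d)) (z / (c * τ + d)) := by
  intro i k h
  apply hz (i * a + k * c) (i * b + k * d)
  rw [zpt_moebius s hj] at h
  field_simp at h
  rw [h]
  push_cast
  ring

end

/-- Theorem: the completed second Appell–Lerch sum `B̂^s_m` transforms like a Jacobi form of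
weight 2 and index `m`: it has the stated behaviour under translation of `s` by `ℤ²`, under
elliptic transformations of `z`, and under `SL(2,ℤ)`. -/
theorem completed_second_appell_lerch_transformations (m : ℕ) (hm : 0 < m) (s : ℚ × ℚ) :
    (∀ lam mu : ℤ, ∀ τ : ℂ, 0 < τ.im → ∀ z : ℂ,
      (∀ a b : ℤ, z ≠ zpt s τ + (a : ℂ) * τ + (b : ℂ)) →
      BhatB m (s.1 + (lam : ℚ), s.2 + (mu : ℚ)) τ z =
        ee (-(m : ℂ) * ((mu : ℂ) * (s.1 : ℚ) - (lam : ℂ) * (s.2 : ℚ) + (lam : ℂ) * (mu : ℂ))) *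
          BhatB m s τ z) ∧
    (∀ lam mu : ℤ, ∀ τ : ℂ, 0 < τ.im → ∀ z : ℂ,
      (∀ a b : ℤ, z ≠ zpt s τ + (a : ℂ) * τ + (b : ℂ)) →
      BhatB m s τ (z + (lam : ℂ) * τ + (mu : ℂ)) =
        ee (-(m : ℂ) * ((lam : ℂ) ^ 2 * τ + 2 * (lam : ℂ) * z)) * BhatB m s τ z) ∧
    (∀ a b c d : ℤ, a * d - b * c = 1 → ∀ τ : ℂ, 0 < τ.im → ∀ z : ℂ,
      (∀ i j : ℤ,
        z ≠ zpt (s.1 * (a : ℚ) + s.2 * (c : ℚ), s.1 * (b : ℚ) + s.2 * (d : ℚ)) τ +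
          (i : ℂ) * τ + (j : ℂ)) →
      BhatB m s (((a : ℂ) * τ + (b : ℂ)) / ((c : ℂ) * τ + (d : ℂ)))
          (z / ((c : ℂ) * τ + (d : ℂ))) =
        ((c : ℂ) * τ + (d : ℂ)) ^ 2 *
          ee ((m : ℂ) * (c : ℂ) * z ^ 2 / ((c : ℂ) * τ + (d : ℂ))) *
          BhatB m (s.1 * (a : ℚ) + s.2 * (c : ℚ), s.1 * (b : ℚ) + s.2 * (d : ℚ)) τ z) := by
  refine ⟨fun lam mu τ hτ z hz => ?_, fun lam mu τ hτ z hz => ?_,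
    fun a b c d hdet τ hτ z hz => ?_⟩
  · rw [BhatB_eq_doublePoleSeries hm hτ (AvoidsPoles.add_intCast hz lam mu),
      BhatB_eq_doublePoleSeries hm hτ hz, doublePoleSeries_add_intCast]
    exact mul_left_comm _ _ _
  · rw [BhatB_eq_doublePoleSeries hm hτ (AvoidsPoles.add_lattice hz lam mu),
      BhatB_eq_doublePoleSeries hm hτ hz, doublePoleSeries_add_lattice]
    exact mul_left_comm _ _ _
  · have h_j := denom_ne_zero_of_det_eq_one hdet hτ
    rw [BhatB_eq_doublePoleSeries hm (im_moebius_pos hdet hτ) (AvoidsPoles.moebius hz h_j),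
      BhatB_eq_doublePoleSeries hm hτ hz, doublePoleSeries_moebius m s hdet hτ]
    exact mul_left_comm _ _ _
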